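/- Suppose the feasible allocation x satisfies the Nashian Greedy condition and the valuations have unit monopolist utilities. Let p < 0, let x* be a feasible allocation with U*_a = ∫_0^T v a s · x*_a s ds > 0 for every agent a, and let W = ((1/n) ∑_a (U*_a)^p)^{1/p}. For β > 0 let B_β = {a : U a T ≤ β·W}. Then |B_β| / n ≤ (β · log(n+1))^{|p|/(|p|+1)}. -/

import Mathlib

open MeasureTheory Real

/-!
While the greedy rule runs, all of the resource goes to agents maximizing `v a s / U a s`, so this
maximum is `∑ a, v a s * x a s / U a s`, the derivative of `∑ a, log (U a s)`. As utilities only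
grow, every competing allocation `y` satisfies
`∑ a, v a s * y a s / U a T ≤ ∑ a, v a s * x a s / U a s`,
and integrating in time bounds `∑ a, Ustar a / U a T` by the total growth of the `log (U a)`.

On the set `B` of agents with `U a T ≤ β * W` this makes `∑ a ∈ B, Ustar a` small compared with
the power mean `W` of `Ustar`. A negative power mean is sensitive to small entries, so, by Hölder's
inequality, `B` has few elements.
-/

open scoped BigOperators

section PowerMean

variable {ι : Type*}

lemma card_le_rpow_sum_mul_rpow_sum_rpow_neg (s : Finset ι) {z : ι → ℝ} {q : ℝ} (hq : 0 < q)
    (hz : ∀ a, 0 < z a) :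
    (s.card : ℝ) ≤ (∑ a ∈ s, z a) ^ (q / (q + 1)) * (∑ a ∈ s, z a ^ (-q)) ^ (1 / (q + 1)) := by
  have weighted_rpow (a : ι) : z a * (z a)⁻¹ ^ (q + 1) = z a ^ (-q) := by
    rw [inv_rpow (hz a).le, ← rpow_neg (hz a).le, ← rpow_one_add' (hz a).le (by linarith)]
    ring_nf
  have exponent : 1 - (q + 1)⁻¹ = q / (q + 1) := by field_simp; ring
  -- Hölder's inequality for the constant function `1 = z * z⁻¹`, with weights `z`.
  have holder := inner_le_weight_mul_Lp_of_nonneg s (p := q + 1) (by linarith) z (fun a ↦ (z a)⁻¹)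
    (fun a ↦ (hz a).le) (fun a ↦ (inv_pos.2 (hz a)).le)
  simpa only [mul_inv_cancel₀ (hz _).ne', weighted_rpow, exponent, Finset.sum_const, nsmul_eq_mul,
    mul_one, one_div] using holder

variable [Fintype ι]

/-- The `p`-mean of a finite family of positive reals, for `p ≠ 0`. -/
noncomputable def powerMean (p : ℝ) (u : ι → ℝ) : ℝ := (𝔼 a, u a ^ p) ^ (1 / p)

variable {p : ℝ} {u : ι → ℝ}

lemma powerMean_pos [Nonempty ι] (hu : ∀ a, 0 < u a) : 0 < powerMean p u :=
  rpow_pos_of_pos (Finset.expect_pos (fun a _ ↦ rpow_pos_of_pos (hu a) p) Finset.univ_nonempty) _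

lemma sum_rpow_eq_card_mul_powerMean_rpow (hp : p ≠ 0) (hu : ∀ a, 0 ≤ u a) :
    ∑ a, u a ^ p = Fintype.card ι * powerMean p u ^ p := by
  have mean_nonneg : 0 ≤ 𝔼 a, u a ^ p := Finset.expect_nonneg fun a _ ↦ rpow_nonneg (hu a) p
  rw [powerMean, ← rpow_mul mean_nonneg, one_div_mul_cancel hp, rpow_one,
    Fintype.card_mul_expect]

lemma card_div_card_le_of_sum_le_mul_powerMean [Nonempty ι] (s : Finset ι) {C : ℝ}
    (hp : p < 0) (hu : ∀ a, 0 < u a) (hs : ∑ a ∈ s, u a ≤ C * (Fintype.card ι * powerMean p u)) :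
    (s.card : ℝ) / Fintype.card ι ≤ C ^ (|p| / (|p| + 1)) := by
  obtain ⟨q, rfl⟩ : ∃ q, p = -q := ⟨-p, (neg_neg p).symm⟩
  have hq : 0 < q := neg_lt_zero.1 hp
  rw [abs_neg, abs_of_pos hq]
  set N := (Fintype.card ι : ℝ)
  set M := powerMean (-q) u
  have hN : 0 < N := Nat.cast_pos.2 Fintype.card_pos
  have hM : 0 < M := powerMean_pos hu
  have sum_nonneg : 0 ≤ ∑ a ∈ s, u a := Finset.sum_nonneg fun a _ ↦ (hu a).le
  have hC : 0 ≤ C := nonneg_of_mul_nonneg_left (sum_nonneg.trans hs) (by positivity)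
  have sum_rpow_nonneg : 0 ≤ ∑ a ∈ s, u a ^ (-q) :=
    Finset.sum_nonneg fun a _ ↦ rpow_nonneg (hu a).le _
  have sum_rpow_le : ∑ a ∈ s, u a ^ (-q) ≤ N * M ^ (-q) := by
    rw [← sum_rpow_eq_card_mul_powerMean_rpow hp.ne fun a ↦ (hu a).le]
    exact Finset.sum_le_univ_sum_of_nonneg fun a ↦ rpow_nonneg (hu a).le _
  have scale_cancel : (N * M) ^ (q / (q + 1)) * (N * M ^ (-q)) ^ (1 / (q + 1)) = N := by
    rw [mul_rpow hN.le hM.le, mul_rpow hN.le (by positivity), ← rpow_mul hM.le,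
      mul_mul_mul_comm, ← rpow_add hN, ← rpow_add hM,
      show q / (q + 1) + 1 / (q + 1) = 1 by field_simp,
      show q / (q + 1) + -q * (1 / (q + 1)) = 0 by ring, rpow_one, rpow_zero, mul_one]
  rw [div_le_iff₀ hN]
  calc (s.card : ℝ)
      ≤ (∑ a ∈ s, u a) ^ (q / (q + 1)) * (∑ a ∈ s, u a ^ (-q)) ^ (1 / (q + 1)) :=
        card_le_rpow_sum_mul_rpow_sum_rpow_neg s hq hu
    _ ≤ (C * (N * M)) ^ (q / (q + 1)) * (N * M ^ (-q)) ^ (1 / (q + 1)) := by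
        gcongr
    _ = C ^ (q / (q + 1)) * N := by
        rw [mul_rpow hC (by positivity), mul_assoc, scale_cancel]

end PowerMean

section FiniteSums

variable {ι 𝕜 : Type*} [Field 𝕜] [LinearOrder 𝕜] [IsStrictOrderedRing 𝕜]

lemma sum_le_mul_sum_div_of_le {s t : Finset ι} (hst : s ⊆ t) {z u : ι → 𝕜} {w : 𝕜}
    (hw : 0 ≤ w) (hz : ∀ a ∈ t, 0 ≤ z a) (hu : ∀ a ∈ t, 0 < u a) (huw : ∀ a ∈ s, u a ≤ w) :
    ∑ a ∈ s, z a ≤ w * ∑ a ∈ t, z a / u a :=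
  calc ∑ a ∈ s, z a
      ≤ ∑ a ∈ s, w * (z a / u a) := Finset.sum_le_sum fun a ha ↦ by
        rw [← mul_div_assoc, le_div_iff₀ (hu a (hst ha)), mul_comm]
        exact mul_le_mul_of_nonneg_right (huw a ha) (hz a (hst ha))
    _ ≤ ∑ a ∈ t, w * (z a / u a) := Finset.sum_le_sum_of_subset_of_nonneg hst fun a ha _ ↦
        mul_nonneg hw (div_nonneg (hz a ha) (hu a ha).le)
    _ = w * ∑ a ∈ t, z a / u a := (Finset.mul_sum ..).symm

variable [Fintype ι] {v u x y : ι → 𝕜}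

lemma div_le_sum_mul_div_of_greedy (hu : ∀ a, 0 < u a) (hx : ∀ a, 0 ≤ x a) (hx_sum : ∑ a, x a = 1)
    (hgreedy : ∀ a b, 0 < x a → v b * u a ≤ v a * u b) (b : ι) :
    v b / u b ≤ ∑ a, v a * x a / u a :=
  calc v b / u b = ∑ a, x a * (v b / u b) := by rw [← Finset.sum_mul, hx_sum, one_mul]
    _ ≤ ∑ a, x a * (v a / u a) := Finset.sum_le_sum fun a _ ↦ by
        rcases (hx a).eq_or_lt with h_zero | h_pos
        · simp only [← h_zero, zero_mul, le_refl]
        · exact mul_le_mul_of_nonneg_left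
            ((div_le_div_iff₀ (hu b) (hu a)).2 (hgreedy a b h_pos)) h_pos.le
    _ = ∑ a, v a * x a / u a := Finset.sum_congr rfl fun a _ ↦ by ring

lemma sum_mul_div_le_of_greedy (hv : ∀ a, 0 ≤ v a) (hu : ∀ a, 0 < u a) (hx : ∀ a, 0 ≤ x a)
    (hx_sum : ∑ a, x a = 1) (hgreedy : ∀ a b, 0 < x a → v b * u a ≤ v a * u b)
    (hy : ∀ a, 0 ≤ y a) (hy_sum : ∑ a, y a ≤ 1) :
    ∑ a, v a * y a / u a ≤ ∑ a, v a * x a / u a := by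
  set rate := ∑ a, v a * x a / u a
  have rate_nonneg : 0 ≤ rate := Finset.sum_nonneg fun a _ ↦
    div_nonneg (mul_nonneg (hv a) (hx a)) (hu a).le
  calc ∑ a, v a * y a / u a
      = ∑ a, y a * (v a / u a) := Finset.sum_congr rfl fun a _ ↦ by ring
    _ ≤ ∑ a, y a * rate := Finset.sum_le_sum fun a _ ↦
        mul_le_mul_of_nonneg_left (div_le_sum_mul_div_of_greedy hu hx hx_sum hgreedy a) (hy a)
    _ = (∑ a, y a) * rate := (Finset.sum_mul ..).symm
    _ ≤ rate := mul_le_of_le_one_left rate_nonneg hy_sum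

end FiniteSums

section LogDerivative

variable {F f : ℝ → ℝ} {a b : ℝ}

lemma monotoneOn_log_comp (hF : MonotoneOn F (Set.Icc a b)) (ha : 0 < F a) :
    MonotoneOn (fun t ↦ log (F t)) (Set.Icc a b) := fun _ hs _ ht hst ↦
  log_le_log (ha.trans_le (hF ⟨le_rfl, hs.1.trans hs.2⟩ hs hs.1)) (hF hs ht hst)

lemma ae_deriv_log_eq_div (hab : a ≤ b) (hF : MonotoneOn F (Set.Icc a b)) (ha : 0 < F a)
    (hf : ∀ᵐ t, t ∈ Set.uIcc a b → HasDerivAt F (f t) t) :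
    ∀ᵐ t, t ∈ Set.uIoc a b → deriv (fun t ↦ log (F t)) t = f t / F t := by
  filter_upwards [hf] with t hft ht
  have ht' : t ∈ Set.Icc a b := Set.uIcc_of_le hab ▸ Set.uIoc_subset_uIcc ht
  have F_pos : 0 < F t := ha.trans_le (hF ⟨le_rfl, hab⟩ ht' ht'.1)
  exact ((hft (Set.uIoc_subset_uIcc ht)).log F_pos.ne').deriv

lemma intervalIntegrable_div_of_monotoneOn (hab : a ≤ b) (hF : MonotoneOn F (Set.Icc a b))
    (ha : 0 < F a) (hf : ∀ᵐ t, t ∈ Set.uIcc a b → HasDerivAt F (f t) t) :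
    IntervalIntegrable (fun t ↦ f t / F t) volume a b := by
  have log_mono := monotoneOn_log_comp hF ha
  rw [← Set.uIcc_of_le hab] at log_mono
  exact log_mono.intervalIntegrable_deriv.congr_ae
    ((ae_restrict_iff' measurableSet_uIoc).2 (ae_deriv_log_eq_div hab hF ha hf))

lemma integral_div_le_log_div_of_monotoneOn (hab : a ≤ b) (hF : MonotoneOn F (Set.Icc a b))
    (ha : 0 < F a) (hf : ∀ᵐ t, t ∈ Set.uIcc a b → HasDerivAt F (f t) t) :
    ∫ t in a..b, f t / F t ≤ log (F b / F a) := by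
  have F_le : F a ≤ F b := hF ⟨le_rfl, hab⟩ ⟨hab, le_rfl⟩ hab
  have log_mono := monotoneOn_log_comp hF ha
  rw [← Set.uIcc_of_le hab] at log_mono
  have integral_mem := log_mono.intervalIntegral_deriv_mem_uIcc
  rw [intervalIntegral.integral_congr_ae (ae_deriv_log_eq_div hab hF ha hf),
    Set.uIcc_of_le (sub_nonneg.2 (log_le_log ha F_le))] at integral_mem
  rw [log_div (ha.trans_le F_le).ne' ha.ne']
  exact integral_mem.2

end LogDerivative

section Allocation

variable {ι : Type*}

/-- Valuations of a divisible resource arriving over the time interval `[0, T]`: `v a s` is the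
value density of agent `a` at time `s`. -/
structure IsValuation (T : ℝ) (v : ι → ℝ → ℝ) : Prop where
  nonneg : ∀ a, ∀ᵐ s ∂volume.restrict (Set.Icc 0 T), 0 ≤ v a s
  integrableOn : ∀ a, IntegrableOn (v a) (Set.Icc 0 T)

/-- Feasible allocations over `[0, T]`: `x a s` is the share of the resource that agent `a`
receives at time `s`. Part of the resource may be discarded. -/
structure IsFeasibleAllocation [Fintype ι] (T : ℝ) (x : ι → ℝ → ℝ) : Prop where
  aestronglyMeasurable : ∀ a, AEStronglyMeasurable (x a) (volume.restrict (Set.Icc 0 T))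
  nonneg_and_sum_le_one :
    ∀ᵐ s ∂volume.restrict (Set.Icc 0 T), (∀ a, 0 ≤ x a s) ∧ ∑ a, x a s ≤ 1

/-- The utility that agent `a` has collected from the allocation `x` by time `t`. -/
noncomputable def utility (v x : ι → ℝ → ℝ) (a : ι) (t : ℝ) : ℝ := ∫ s in (0 : ℝ)..t, v a s * x a s

/-- The utility of agent `a` at time `t` when every agent `b` starts with an endowment `c b`;
the base-`1/n` utility is the case `c = fun _ ↦ 1 / n`. -/
noncomputable def baseUtility (c : ι → ℝ) (v x : ι → ℝ → ℝ) (a : ι) (t : ℝ) : ℝ :=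
  c a + utility v x a t

/-- The Nashian Greedy condition: at almost every time the whole resource goes to agents maximizing
the ratio of current valuation to current base utility. The ratios are compared after
cross-multiplication. -/
def IsNashianGreedy [Fintype ι] (T : ℝ) (c : ι → ℝ) (v x : ι → ℝ → ℝ) : Prop :=
  ∀ᵐ s ∂volume.restrict (Set.Icc 0 T), ∑ a, x a s = 1 ∧
    ∀ a b, 0 < x a s → v b s * baseUtility c v x a s ≤ v a s * baseUtility c v x b s

variable {T : ℝ} {c : ι → ℝ} {v x y : ι → ℝ → ℝ}

lemma IsValuation.intervalIntegrable (hT : 0 ≤ T) (hv : IsValuation T v) (a : ι) :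
    IntervalIntegrable (v a) volume 0 T :=
  (intervalIntegrable_iff_integrableOn_Icc_of_le hT).2 (hv.integrableOn a)

lemma baseUtility_zero (a : ι) : baseUtility c v x a 0 = c a := by
  rw [baseUtility, utility, intervalIntegral.integral_same, add_zero]

variable [Fintype ι]

lemma IsFeasibleAllocation.ae_mem_Icc (hx : IsFeasibleAllocation T x) (a : ι) :
    ∀ᵐ s ∂volume.restrict (Set.Icc 0 T), x a s ∈ Set.Icc 0 1 := by
  filter_upwards [hx.nonneg_and_sum_le_one] with s ⟨hnonneg, hsum⟩
  exact ⟨hnonneg a, (Finset.single_le_sum (fun b _ ↦ hnonneg b) (Finset.mem_univ a)).trans hsum⟩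

lemma IsValuation.ae_mul_nonneg (hv : IsValuation T v) (hx : IsFeasibleAllocation T x) (a : ι) :
    ∀ᵐ s ∂volume.restrict (Set.Icc 0 T), 0 ≤ v a s * x a s := by
  filter_upwards [hv.nonneg a, hx.ae_mem_Icc a] with s hvs hxs
  exact mul_nonneg hvs hxs.1

lemma IsValuation.intervalIntegrable_mul (hT : 0 ≤ T) (hv : IsValuation T v)
    (hx : IsFeasibleAllocation T x) (a : ι) :
    IntervalIntegrable (fun s ↦ v a s * x a s) volume 0 T := by
  rw [intervalIntegrable_iff_integrableOn_Icc_of_le hT]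
  refine (hv.integrableOn a).mul_bdd (c := 1) (hx.aestronglyMeasurable a) ?_
  filter_upwards [hx.ae_mem_Icc a] with s hs
  exact (norm_of_nonneg hs.1).trans_le hs.2

lemma utility_le_integral (hT : 0 ≤ T) (hv : IsValuation T v) (hx : IsFeasibleAllocation T x)
    (a : ι) : utility v x a T ≤ ∫ s in (0 : ℝ)..T, v a s := by
  refine intervalIntegral.integral_mono_ae_restrict hT (hv.intervalIntegrable_mul hT hx a)
    (hv.intervalIntegrable hT a) ?_
  filter_upwards [hv.nonneg a, hx.ae_mem_Icc a] with s hvs hxs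
  exact mul_le_of_le_one_right hvs hxs.2

lemma baseUtility_monotoneOn (hT : 0 ≤ T) (hv : IsValuation T v) (hx : IsFeasibleAllocation T x)
    (a : ι) : MonotoneOn (baseUtility c v x a) (Set.Icc 0 T) := fun s hs t ht hst ↦ by
  have ae_nonneg := ae_restrict_of_ae_restrict_of_subset
    (Set.Ioc_subset_Icc_self.trans (Set.Icc_subset_Icc_right ht.2)) (hv.ae_mul_nonneg hx a)
  have integrable := (hv.intervalIntegrable_mul hT hx a).mono_set
    (Set.uIcc_subset_uIcc_left (Set.Icc_subset_uIcc ht))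
  exact add_le_add_right
    (intervalIntegral.integral_mono_interval le_rfl hs.1 hst ae_nonneg integrable) _

lemma baseUtility_pos (hT : 0 ≤ T) (hc : ∀ a, 0 < c a) (hv : IsValuation T v)
    (hx : IsFeasibleAllocation T x) (a : ι) {t : ℝ} (ht : t ∈ Set.Icc 0 T) :
    0 < baseUtility c v x a t := by
  have base_le := baseUtility_monotoneOn (c := c) hT hv hx a ⟨le_rfl, hT⟩ ht ht.1
  rw [baseUtility_zero] at base_le
  exact (hc a).trans_le base_le

lemma ae_hasDerivAt_baseUtility (hT : 0 ≤ T) (hv : IsValuation T v)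
    (hx : IsFeasibleAllocation T x) (a : ι) :
    ∀ᵐ t, t ∈ Set.uIcc 0 T → HasDerivAt (baseUtility c v x a) (v a t * x a t) t := by
  filter_upwards [(hv.intervalIntegrable_mul hT hx a).ae_hasDerivAt_integral] with t h_deriv ht
  exact (h_deriv ht 0 Set.left_mem_uIcc).const_add (c a)

lemma intervalIntegrable_mul_div_baseUtility (hT : 0 ≤ T) (hc : ∀ a, 0 < c a)
    (hv : IsValuation T v) (hx : IsFeasibleAllocation T x) (a : ι) :
    IntervalIntegrable (fun s ↦ v a s * x a s / baseUtility c v x a s) volume 0 T :=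
  intervalIntegrable_div_of_monotoneOn hT (baseUtility_monotoneOn hT hv hx a)
    (baseUtility_pos hT hc hv hx a ⟨le_rfl, hT⟩) (ae_hasDerivAt_baseUtility hT hv hx a)

lemma integral_mul_div_baseUtility_le (hT : 0 ≤ T) (hc : ∀ a, 0 < c a)
    (hv : IsValuation T v) (hx : IsFeasibleAllocation T x) (a : ι) :
    ∫ s in (0 : ℝ)..T, v a s * x a s / baseUtility c v x a s ≤
      log (1 + (∫ s in (0 : ℝ)..T, v a s) / c a) := by
  have final_pos : 0 < baseUtility c v x a T := baseUtility_pos hT hc hv hx a ⟨hT, le_rfl⟩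
  calc ∫ s in (0 : ℝ)..T, v a s * x a s / baseUtility c v x a s
      ≤ log (baseUtility c v x a T / baseUtility c v x a 0) :=
        integral_div_le_log_div_of_monotoneOn hT (baseUtility_monotoneOn hT hv hx a)
          (baseUtility_pos hT hc hv hx a ⟨le_rfl, hT⟩) (ae_hasDerivAt_baseUtility hT hv hx a)
    _ ≤ log (1 + (∫ s in (0 : ℝ)..T, v a s) / c a) := by
        rw [baseUtility_zero]
        refine log_le_log (div_pos final_pos (hc a)) ?_
        rw [one_add_div (hc a).ne']
        exact div_le_div_of_nonneg_right
          (add_le_add_right (utility_le_integral hT hv hx a) _) (hc a).le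

lemma IsNashianGreedy.ae_sum_mul_div_le (hT : 0 ≤ T) (hc : ∀ a, 0 < c a) (hv : IsValuation T v)
    (hx : IsFeasibleAllocation T x) (hgreedy : IsNashianGreedy T c v x)
    (hy : IsFeasibleAllocation T y) :
    ∀ᵐ s ∂volume.restrict (Set.Icc 0 T),
      ∑ a, v a s * y a s / baseUtility c v x a T ≤
        ∑ a, v a s * x a s / baseUtility c v x a s := by
  filter_upwards [ae_all_iff.2 hv.nonneg, hx.nonneg_and_sum_le_one, hy.nonneg_and_sum_le_one,
    hgreedy, ae_restrict_mem measurableSet_Icc] with s hvs hxs hys hgs hs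
  have current_pos (a : ι) : 0 < baseUtility c v x a s := baseUtility_pos hT hc hv hx a hs
  calc ∑ a, v a s * y a s / baseUtility c v x a T
      ≤ ∑ a, v a s * y a s / baseUtility c v x a s := Finset.sum_le_sum fun a _ ↦
        div_le_div_of_nonneg_left (mul_nonneg (hvs a) (hys.1 a)) (current_pos a)
          (baseUtility_monotoneOn hT hv hx a hs ⟨hT, le_rfl⟩ hs.2)
    _ ≤ ∑ a, v a s * x a s / baseUtility c v x a s :=
        sum_mul_div_le_of_greedy hvs current_pos hxs.1 hgs.1 hgs.2 hys.1 hys.2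

lemma IsNashianGreedy.sum_utility_div_baseUtility_le (hT : 0 ≤ T) (hc : ∀ a, 0 < c a)
    (hv : IsValuation T v) (hx : IsFeasibleAllocation T x) (hgreedy : IsNashianGreedy T c v x)
    (hy : IsFeasibleAllocation T y) :
    ∑ a, utility v y a T / baseUtility c v x a T ≤
      ∑ a, log (1 + (∫ s in (0 : ℝ)..T, v a s) / c a) := by
  have greedy_integrable (a : ι) := intervalIntegrable_mul_div_baseUtility hT hc hv hx a
  have rival_integrable (a : ι) :
      IntervalIntegrable (fun s ↦ v a s * y a s / baseUtility c v x a T) volume 0 T :=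
    (hv.intervalIntegrable_mul hT hy a).div_const _
  calc ∑ a, utility v y a T / baseUtility c v x a T
      = ∫ s in (0 : ℝ)..T, ∑ a, v a s * y a s / baseUtility c v x a T := by
        rw [intervalIntegral.integral_finsetSum fun a _ ↦ rival_integrable a]
        simp only [intervalIntegral.integral_div, utility]
    _ ≤ ∫ s in (0 : ℝ)..T, ∑ a, v a s * x a s / baseUtility c v x a s :=
        intervalIntegral.integral_mono_ae_restrict hT
          (by simpa only [Finset.sum_fn] using!
            IntervalIntegrable.sum Finset.univ fun a _ ↦ rival_integrable a)
          (by simpa only [Finset.sum_fn] using!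
            IntervalIntegrable.sum Finset.univ fun a _ ↦ greedy_integrable a)
          (hgreedy.ae_sum_mul_div_le hT hc hv hx hy)
    _ = ∑ a, ∫ s in (0 : ℝ)..T, v a s * x a s / baseUtility c v x a s :=
        intervalIntegral.integral_finsetSum fun a _ ↦ greedy_integrable a
    _ ≤ ∑ a, log (1 + (∫ s in (0 : ℝ)..T, v a s) / c a) :=
        Finset.sum_le_sum fun a _ ↦ integral_mul_div_baseUtility_le hT hc hv hx a

end Allocation

theorem stmt_6_general {ι : Type*} [Fintype ι] [Nonempty ι] {T : ℝ} (hT : 0 ≤ T)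
    {c : ι → ℝ} (hc : ∀ a, 0 < c a) {v x y : ι → ℝ → ℝ} (hv : IsValuation T v)
    (hx : IsFeasibleAllocation T x) (hgreedy : IsNashianGreedy T c v x)
    (hy : IsFeasibleAllocation T y) (hy_pos : ∀ a, 0 < utility v y a T)
    {p : ℝ} (hp : p < 0) {β : ℝ} (hβ : 0 < β) :
    ({a | baseUtility c v x a T ≤ β * powerMean p (utility v y · T)}.ncard : ℝ) /
        Fintype.card ι ≤
      (β * 𝔼 a, log (1 + (∫ s in (0 : ℝ)..T, v a s) / c a)) ^ (|p| / (|p| + 1)) := by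
  classical
  set W := powerMean p (utility v y · T)
  have hW : 0 < W := powerMean_pos hy_pos
  rw [Set.ncard_eq_toFinset_card']
  refine card_div_card_le_of_sum_le_mul_powerMean _ hp hy_pos ?_
  calc ∑ a ∈ Set.toFinset {a | baseUtility c v x a T ≤ β * W}, utility v y a T
      ≤ β * W * ∑ a, utility v y a T / baseUtility c v x a T :=
        sum_le_mul_sum_div_of_le (Finset.subset_univ _) (by positivity)
          (fun a _ ↦ (hy_pos a).le) (fun a _ ↦ baseUtility_pos hT hc hv hx a ⟨hT, le_rfl⟩)
          (fun a ha ↦ by rwa [Set.mem_toFinset] at ha)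
    _ ≤ β * W * ∑ a, log (1 + (∫ s in (0 : ℝ)..T, v a s) / c a) := by
        gcongr ?_ * ?_
        exact hgreedy.sum_utility_div_baseUtility_le hT hc hv hx hy
    _ = β * (𝔼 a, log (1 + (∫ s in (0 : ℝ)..T, v a s) / c a)) * (Fintype.card ι * W) := by
        rw [← Fintype.card_mul_expect]
        ring

theorem stmt_6
    (n : ℕ) (hn : 1 ≤ n) (T : ℝ) (hT : 0 < T)
    (v : Fin n → ℝ → ℝ)
    (hv_meas : ∀ a, Measurable (v a))
    (hv_nonneg : ∀ a, ∀ᵐ s ∂(volume.restrict (Set.Icc (0:ℝ) T)), 0 ≤ v a s)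
    (hv_int : ∀ a, IntegrableOn (v a) (Set.Icc (0:ℝ) T))
    (hv_unit : ∀ a, ∫ s in (0:ℝ)..T, v a s = 1)
    (x : Fin n → ℝ → ℝ)
    (hx_meas : ∀ a, Measurable (x a))
    (hx_feas : ∀ᵐ s ∂(volume.restrict (Set.Icc (0:ℝ) T)),
      (∀ a, 0 ≤ x a s) ∧ ∑ a, x a s ≤ 1)
    (U : Fin n → ℝ → ℝ)
    (hU : ∀ a t, U a t = 1 / (n : ℝ) + ∫ s in (0:ℝ)..t, v a s * x a s)
    (hgreedy : ∀ᵐ s ∂(volume.restrict (Set.Icc (0:ℝ) T)),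
      (∑ a, x a s = 1) ∧
      ∀ a b, 0 < x a s → v a s * U b s ≥ v b s * U a s)
    (p : ℝ) (hp : p < 0)
    (xstar : Fin n → ℝ → ℝ)
    (hxstar_meas : ∀ a, Measurable (xstar a))
    (hxstar_feas : ∀ᵐ s ∂(volume.restrict (Set.Icc (0:ℝ) T)),
      (∀ a, 0 ≤ xstar a s) ∧ ∑ a, xstar a s ≤ 1)
    (Ustar : Fin n → ℝ)
    (hUstar : ∀ a, Ustar a = ∫ s in (0:ℝ)..T, v a s * xstar a s)
    (hUstar_pos : ∀ a, 0 < Ustar a)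
    (W : ℝ) (hW : W = ((1 / (n : ℝ)) * ∑ a, (Ustar a) ^ p) ^ (1 / p))
    (β : ℝ) (hβ : 0 < β) :
    ({a : Fin n | U a T ≤ β * W}.ncard : ℝ) / (n : ℝ) ≤
      (β * Real.log ((n : ℝ) + 1)) ^ (|p| / (|p| + 1)) := by
  obtain rfl : U = baseUtility (fun _ ↦ 1 / (n : ℝ)) v x := funext₂ hU
  obtain rfl : Ustar = (utility v xstar · T) := funext hUstar
  have : Nonempty (Fin n) := ⟨⟨0, hn⟩⟩
  have bound := stmt_6_general hT.le (fun _ ↦ one_div_pos.2 (Nat.cast_pos.2 hn))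
    ⟨hv_nonneg, hv_int⟩ ⟨fun a ↦ (hx_meas a).aestronglyMeasurable, hx_feas⟩ hgreedy
    ⟨fun a ↦ (hxstar_meas a).aestronglyMeasurable, hxstar_feas⟩ hUstar_pos hp hβ
  have hW' : W = powerMean p (utility v xstar · T) := by
    rw [hW, powerMean, Fintype.expect_eq_sum_div_card, Fintype.card_fin, one_div_mul_eq_div]
  simpa only [← hW', hv_unit, one_div_one_div, Fintype.expect_const, Fintype.card_fin,
    add_comm (1 : ℝ)] using bound
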